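/- Let μ be an ergodic process on Σ = 𝒜^{ℤ_{≥0}^d} with entropy rate h(μ) = h, and let δ > 0, δ′ > 0, β ∈ (0,1]. Then there is k_0 = k_0(δ,δ′) such that for every k ≥ k_0 there exists a set 𝒯_k ⊆ Σ^k (independent of x) with log|𝒯_k| / k^d ≤ h + δ, such that for μ-almost every x there is n_0 = n_0(x,k,δ,δ′) with the following property for all n ≥ n_0: for every collection λ_1, …, λ_I of pairwise non-overlapping translates of Λ_k contained in Λ_n whose union Ξ satisfies |Ξ| ≥ β·n^d, the words w_i = x(λ_i) belong to 𝒯_k for at least a (1−δ′)-fraction of the indices i ∈ {1,…,I}. -/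

import Mathlib

open MeasureTheory Filter Topology

namespace SRU1408

/-- A site of the lattice `ℤ_{≥0}^d`. -/
abbrev Site (d : ℕ) := Fin d → ℕ

/-- An infinite array over the alphabet `Fin A`, i.e. an element of `Σ = 𝒜^{ℤ_{≥0}^d}`. -/
abbrev Config (A d : ℕ) := Site d → Fin A

/-- A cubical `k`-word, i.e. an element of `Σ^k = 𝒜^{Λ_k}`. -/
abbrev Word (A d k : ℕ) := (Fin d → Fin k) → Fin A

variable {A d : ℕ}

/-- The pattern of `x` on the cube `Λ_k + c`, as a `k`-word. -/
def wordAt (x : Config A d) (k : ℕ) (c : Site d) : Word A d k :=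
  fun i => x fun j => c j + (i j : ℕ)

/-- The lattice shift `σ_r`. -/
def shift (r : Site d) (x : Config A d) : Config A d := fun i => x (i + r)

/-- Stationarity: invariance under all shifts. -/
def Stationary (μ : Measure (Config A d)) : Prop := ∀ r : Site d, μ.map (shift r) = μ

/-- Ergodicity: stationary, and every measurable set invariant under all shifts is trivial. -/
def ErgodicShift (μ : Measure (Config A d)) : Prop :=
  Stationary μ ∧ ∀ E : Set (Config A d), MeasurableSet E →
    (∀ r : Site d, shift r ⁻¹' E = E) → μ E = 0 ∨ μ E = 1

/-- The `k`-word marginal distribution `μ^k`, as a probability vector on `Σ^k`. -/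
noncomputable def wordDist (μ : Measure (Config A d)) (k : ℕ) : Word A d k → ℝ :=
  fun w => (μ {x | wordAt x k 0 = w}).toReal

/-- Base-`A` entropy of a probability vector. -/
noncomputable def entH (A : ℕ) {W : Type*} [Fintype W] (p : W → ℝ) : ℝ :=
  -∑ w, p w * Real.logb A (p w)

/-- `μ` has entropy rate `h` (base-`A` logarithms): `H(μ^n)/n^d → h`. -/
def HasEntropyRate (μ : Measure (Config A d)) (h : ℝ) : Prop :=
  Tendsto (fun n : ℕ => entH A (wordDist μ n) / (n : ℝ) ^ d) atTop (𝓝 h)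

theorem shift_shift (r s : Site d) (x : Config A d) : shift r (shift s x) = shift (r + s) x := by
  funext i
  simp only [shift, add_assoc]

theorem measurable_shift (r : Site d) : Measurable (shift r : Config A d → Config A d) :=
  measurable_pi_lambda _ fun i => measurable_pi_apply (i + r)

theorem measurable_wordAt (k : ℕ) (c : Site d) :
    Measurable (fun x : Config A d => wordAt x k c) :=
  measurable_pi_lambda _ fun i => measurable_pi_apply fun j => c j + (i j : ℕ)

theorem Stationary.measurePreserving {μ : Measure (Config A d)} (hμ : Stationary μ)
    (r : Site d) : MeasurePreserving (shift r) μ μ :=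
  ⟨measurable_shift r, hμ r⟩

theorem Stationary.integral_comp_shift {μ : Measure (Config A d)} (hμ : Stationary μ)
    (r : Site d) {f : Config A d → ℝ} (hf : Measurable f) :
    ∫ x, f (shift r x) ∂μ = ∫ x, f x ∂μ := by
  conv_rhs => rw [← hμ r]
  exact (integral_map (measurable_shift r).aemeasurable hf.aestronglyMeasurable).symm

/-- Sets that are invariant up to null sets are trivial. -/
theorem ErgodicShift.measure_eq_zero_or_one {μ : Measure (Config A d)}
    [IsProbabilityMeasure μ] (hμ : ErgodicShift μ) {E : Set (Config A d)} (hE : MeasurableSet E)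
    (hinv : ∀ r : Site d, shift r ⁻¹' E ≤ᵐ[μ] E) : μ E = 0 ∨ μ E = 1 := by
  have heq : ∀ r : Site d, shift r ⁻¹' E =ᵐ[μ] E := fun r =>
    ae_eq_of_ae_subset_of_measure_ge (hinv r)
      ((hμ.1.measurePreserving r).measure_preimage hE.nullMeasurableSet).ge
      ((measurable_shift r) hE).nullMeasurableSet (measure_ne_top _ _)
  set E' : Set (Config A d) := ⋃ r : Site d, ⋂ t : Site d, shift (r + t) ⁻¹' E with hE'
  have hmeas : MeasurableSet E' :=
    MeasurableSet.iUnion fun r => MeasurableSet.iInter fun t => measurable_shift _ hE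
  have hEE' : E' =ᵐ[μ] E := by
    have hall : ∀ᵐ x ∂μ, ∀ r : Site d, (shift r x ∈ E ↔ x ∈ E) :=
      ae_all_iff.2 fun r => (heq r).mem_iff
    refine eventuallyEq_set.2 ?_
    filter_upwards [hall] with x hx
    simp [hE', hx]
  rw [← measure_congr hEE']
  refine hμ.2 E' hmeas fun u => ?_
  ext x
  simp only [hE', Set.mem_preimage, Set.mem_iUnion, Set.mem_iInter, shift_shift]
  constructor
  · rintro ⟨r, hr⟩
    exact ⟨r + u, fun t => by simpa only [add_right_comm] using hr t⟩
  · rintro ⟨r, hr⟩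
    exact ⟨r, fun t => by simpa only [add_assoc] using hr (t + u)⟩

theorem ErgodicShift.ae_eq_const {μ : Measure (Config A d)}
    [IsProbabilityMeasure μ] (hμ : ErgodicShift μ) {v : Config A d → ℝ} (hv : Measurable v)
    (hinv : ∀ r : Site d, v ∘ shift r =ᵐ[μ] v) : ∃ κ : ℝ, v =ᵐ[μ] fun _ => κ := by
  refine exists_eventuallyEq_const_of_forall_separating MeasurableSet fun U hU => ?_
  have hpre : ∀ r : Site d, shift r ⁻¹' (v ⁻¹' U) ≤ᵐ[μ] v ⁻¹' U := fun r => by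
    filter_upwards [hinv r] with x hx
    change v (shift r x) ∈ U → v x ∈ U
    rw [← hx]
    exact id
  rcases hμ.measure_eq_zero_or_one (hv hU) hpre with h | h
  · exact Or.inr (measure_eq_zero_iff_ae_notMem.1 h)
  · exact Or.inl ((mem_ae_iff_prob_eq_one (hv hU)).2 h)

/-- Mean ergodic theorem, in the form that a convex combination of translates of a bounded
function is close to its mean. -/
theorem ErgodicShift.exists_convex_combination_near_mean {μ : Measure (Config A d)}
    [IsProbabilityMeasure μ] (hμ : ErgodicShift μ) {f : Config A d → ℝ} (hf : Measurable f)
    {C : ℝ} (hC : ∀ x, |f x| ≤ C) {ε : ℝ} (hε : 0 < ε) :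
    ∃ (ι : Type) (_ : Fintype ι) (a : ι → ℝ) (s : ι → Site d), (∀ i, 0 ≤ a i) ∧ ∑ i, a i = 1 ∧
      ∫ x, |∑ i, a i * f (shift (s i) x) - ∫ y, f y ∂μ| ∂μ ≤ ε := by
  have hmem : MemLp f 2 μ := MemLp.of_bound hf.aestronglyMeasurable C (ae_of_all _ hC)
  set U : Site d → (Lp ℝ 2 μ →ₗᵢ[ℝ] Lp ℝ 2 μ) := fun r =>
    Lp.compMeasurePreservingₗᵢ ℝ (shift r) (hμ.1.measurePreserving r) with hU
  have hUcoe : ∀ r (g : Lp ℝ 2 μ), U r g =ᵐ[μ] g ∘ shift r := fun r g =>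
    Lp.coeFn_compMeasurePreserving g (hμ.1.measurePreserving r)
  set F : Lp ℝ 2 μ := hmem.toLp f with hF
  have hUF : ∀ r, U r F =ᵐ[μ] f ∘ shift r := fun r =>
    (hUcoe r F).trans ((hμ.1.measurePreserving r).quasiMeasurePreserving.ae_eq_comp hmem.coeFn_toLp)
  set S : Set (Lp ℝ 2 μ) := Set.range fun r => U r F with hS
  set K : Set (Lp ℝ 2 μ) := closure (convexHull ℝ S) with hK
  have hconv : Convex ℝ K := (convex_convexHull ℝ S).closure
  have hUK : ∀ r, ∀ g ∈ K, U r g ∈ K := by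
    intro r g hg
    have hmaps : Set.MapsTo (U r) (convexHull ℝ S) (convexHull ℝ S) := by
      have hsub : convexHull ℝ S ⊆ (U r).toLinearMap ⁻¹' (convexHull ℝ S) := by
        refine convexHull_min ?_ ((convex_convexHull ℝ S).linear_preimage _)
        rintro _ ⟨s, rfl⟩
        refine subset_convexHull ℝ S ⟨s + r, ?_⟩
        refine Lp.ext ?_
        refine (hUF (s + r)).trans ?_
        refine EventuallyEq.trans ?_ (hUcoe r (U s F)).symm
        refine EventuallyEq.trans ?_ (((hμ.1.measurePreserving
          r).quasiMeasurePreserving.ae_eq_comp (hUF s)).symm)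
        refine ae_of_all _ fun x => ?_
        simp only [Function.comp, shift_shift]
      exact hsub
    exact hmaps.closure (U r).continuous hg
  obtain ⟨v, hvK, hv⟩ := exists_norm_eq_iInf_of_complete_convex
    (K := K) ⟨F, subset_closure (subset_convexHull ℝ S ⟨0, by
      refine Lp.ext ((hUF 0).trans ?_)
      refine EventuallyEq.trans ?_ hmem.coeFn_toLp.symm
      exact ae_of_all _ fun x => rfl⟩)⟩ isClosed_closure.isComplete hconv 0
  rw [norm_eq_iInf_iff_real_inner_le_zero hconv hvK] at hv
  have hfix : ∀ r, U r v = v := by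
    intro r
    have h1 := hv _ (hUK r v hvK)
    rw [zero_sub, inner_neg_left, inner_sub_right, real_inner_self_eq_norm_sq] at h1
    have h2 := norm_sub_sq_real (U r v) v
    rw [(U r).norm_map, real_inner_comm] at h2
    have h3 : ‖U r v - v‖ ^ 2 ≤ 0 := by linarith
    have h4 : ‖U r v - v‖ = 0 := by
      have := sq_nonneg ‖U r v - v‖
      exact pow_eq_zero_iff two_ne_zero |>.1 (le_antisymm h3 this)
    exact sub_eq_zero.1 (norm_eq_zero.1 h4)
  obtain ⟨κ, hκ⟩ := hμ.ae_eq_const (Lp.stronglyMeasurable v).measurable (fun r => by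
    have := hUcoe r v
    rw [hfix r] at this
    exact this.symm)
  obtain ⟨g, hg, hvg⟩ := Metric.mem_closure_iff.1 hvK (ε / 2) (by positivity)
  obtain ⟨ι, hι, a, z, ha0, ha1, hz, hsum⟩ := mem_convexHull_iff_exists_fintype.1 hg
  choose s hs using hz
  refine ⟨ι, hι, a, s, ha0, ha1, ?_⟩
  have hgae : g =ᵐ[μ] fun x => ∑ i, a i * f (shift (s i) x) := by
    rw [← hsum]
    have h1 : (↑(∑ i, a i • z i : Lp ℝ 2 μ) : Config A d → ℝ) =ᵐ[μ]
        ∑ i, ((a i • z i : Lp ℝ 2 μ) : Config A d → ℝ) := Lp.coeFn_finsetSum _ _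
    have h2 : ∀ᵐ x ∂μ, ∀ i, (a i • z i : Lp ℝ 2 μ) x = a i * f (shift (s i) x) := by
      refine ae_all_iff.2 fun i => ?_
      filter_upwards [Lp.coeFn_smul (a i) (z i), hUF (s i)] with x hx hx'
      have hsi : U (s i) F = z i := hs i
      rw [hsi] at hx'
      rw [hx, Pi.smul_apply, hx', smul_eq_mul, Function.comp]
    filter_upwards [h1, h2] with x hx hx'
    rw [hx, Finset.sum_apply]
    exact Finset.sum_congr rfl fun i _ => hx' i
  have hfi : ∀ i, Integrable (fun x => f (shift (s i) x)) μ := fun i =>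
    (hμ.1.measurePreserving (s i)).integrable_comp_of_integrable
      (hmem.integrable (by norm_num))
  have hgint : Integrable (fun x => ∑ i, a i * f (shift (s i) x)) μ :=
    integrable_finsetSum _ fun i _ => (hfi i).const_mul _
  have hmean : ∫ x, ∑ i, a i * f (shift (s i) x) ∂μ = ∫ y, f y ∂μ := by
    rw [integral_finsetSum _ fun i _ => (hfi i).const_mul _]
    have : ∀ i, ∫ x, a i * f (shift (s i) x) ∂μ = a i * ∫ y, f y ∂μ := fun i => by
      rw [integral_const_mul]
      congr 1
      exact hμ.1.integral_comp_shift (s i) hf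
    simp only [this, ← Finset.sum_mul, ha1, one_mul]
  have hL1 : ∫ x, |∑ i, a i * f (shift (s i) x) - κ| ∂μ ≤ ε / 2 := by
    have h1 : ∫ x, |∑ i, a i * f (shift (s i) x) - κ| ∂μ = (eLpNorm (⇑g - ⇑v) 1 μ).toReal := by
      rw [eLpNorm_one_eq_lintegral_enorm, ← integral_norm_eq_lintegral_enorm]
      · refine integral_congr_ae ?_
        filter_upwards [hgae, hκ] with x hx hx'
        rw [Pi.sub_apply, hx, hx', Real.norm_eq_abs]
      · exact (Lp.aestronglyMeasurable g).sub (Lp.aestronglyMeasurable v)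
    have h2 : eLpNorm (⇑g - ⇑v) 1 μ ≤ eLpNorm (⇑g - ⇑v) 2 μ :=
      eLpNorm_le_eLpNorm_of_exponent_le (by norm_num)
        ((Lp.aestronglyMeasurable g).sub (Lp.aestronglyMeasurable v))
    rw [h1]
    rw [dist_comm, Lp.dist_def] at hvg
    refine (ENNReal.toReal_mono ?_ h2).trans hvg.le
    exact ((Lp.memLp g).sub (Lp.memLp v)).eLpNorm_ne_top
  have hκf : |κ - ∫ y, f y ∂μ| ≤ ε / 2 := by
    rw [← hmean, abs_sub_comm]
    refine le_trans ?_ hL1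
    have : ∫ x, ∑ i, a i * f (shift (s i) x) ∂μ - κ
        = ∫ x, (∑ i, a i * f (shift (s i) x) - κ) ∂μ := by
      rw [integral_sub hgint (integrable_const _)]
      simp
    rw [this]
    exact abs_integral_le_integral_abs
  calc ∫ x, |∑ i, a i * f (shift (s i) x) - ∫ y, f y ∂μ| ∂μ
      ≤ ∫ x, (|∑ i, a i * f (shift (s i) x) - κ| + ε / 2) ∂μ := by
        refine integral_mono ?_ ?_ fun x => ?_
        · exact (hgint.sub (integrable_const _)).abs
        · exact (hgint.sub (integrable_const _)).abs.add (integrable_const _)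
        · exact (abs_sub_le _ κ _).trans (by gcongr)
    _ ≤ ε := by
        have habs : Integrable (fun x => |∑ i, a i * f (shift (s i) x) - κ|) μ :=
          (hgint.sub (integrable_const _)).abs
        rw [integral_add habs (integrable_const _), integral_const, probReal_univ, one_smul]
        linarith

/-- The box `c + Λ_n`. -/
def block (c : Site d) (n : ℕ) : Finset (Site d) :=
  Fintype.piFinset fun j => Finset.Ico (c j) (c j + n)

/-- The cube `Λ_n`. -/
def cube (d n : ℕ) : Finset (Site d) := Fintype.piFinset fun _ => Finset.range n

@[simp]
theorem mem_block {c y : Site d} {n : ℕ} : y ∈ block c n ↔ ∀ j, c j ≤ y j ∧ y j < c j + n := by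
  simp [block]

@[simp]
theorem mem_cube {y : Site d} {n : ℕ} : y ∈ cube d n ↔ ∀ j, y j < n := by
  simp [cube]

theorem card_cube (d n : ℕ) : (cube d n).card = n ^ d := by
  simp [cube]

theorem sum_block (ψ : Site d → ℝ) (c : Site d) (n : ℕ) :
    ∑ y ∈ block c n, ψ y = ∑ e ∈ cube d n, ψ (e + c) := by
  refine Finset.sum_nbij' (fun y => y - c) (fun e => e + c) ?_ ?_ ?_ ?_ ?_
  · intro y hy
    simp only [mem_block, mem_cube, Pi.sub_apply] at hy ⊢
    intro j
    have := hy j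
    omega
  · intro e he
    simp only [mem_block, mem_cube, Pi.add_apply] at he ⊢
    intro j
    have := he j
    omega
  · intro y hy
    simp only [mem_block] at hy
    funext j
    have := hy j
    simp only [Pi.add_apply, Pi.sub_apply]
    omega
  · intro e _
    simp
  · intro y hy
    simp only [mem_block] at hy
    congr 1
    funext j
    have := hy j
    simp only [Pi.add_apply, Pi.sub_apply]
    omega

/-- Finite Vitali covering estimate for cubes in the lattice. -/
theorem card_mul_le_of_block_sums {ψ : Site d → ℝ} (hψ : ∀ c, 0 ≤ ψ c) {lam : ℝ} (hlam : 0 ≤ lam)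
    {M N : ℕ} {P : Finset (Site d)} (hP : P ⊆ cube d M) (n : Site d → ℕ)
    (hn0 : ∀ c ∈ P, 0 < n c) (hnN : ∀ c ∈ P, n c ≤ N)
    (hsum : ∀ c ∈ P, lam * (n c : ℝ) ^ d ≤ ∑ y ∈ block c (n c), ψ y) :
    lam * P.card ≤ 3 ^ d * ∑ y ∈ cube d (M + N), ψ y := by
  classical
  obtain ⟨u, huP, hdisj, hcov⟩ := Vitali.exists_disjoint_subfamily_covering_enlargement
    (fun c : Site d => (block c (n c) : Set (Site d))) (P : Set (Site d)) (fun c => (n c : ℝ)) 2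
    (by norm_num) (fun c _ => by positivity) N (fun c hc => by exact_mod_cast hnN c hc)
    (fun c hc => ⟨c, by
      simp only [Finset.mem_coe, mem_block]
      have := hn0 c hc
      intro j
      omega⟩)
  have hufin : u.Finite := P.finite_toSet.subset huP
  set V : Finset (Site d) := hufin.toFinset with hV
  have hVP : V ⊆ P := fun c hc => huP (hufin.mem_toFinset.1 hc)
  have hPcov : P ⊆ V.biUnion fun b =>
      Fintype.piFinset fun j => Finset.Ico (b j - 2 * n b) (b j + n b) := by
    intro a ha
    obtain ⟨b, hb, ⟨y, hya, hyb⟩, hab⟩ := hcov a ha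
    refine Finset.mem_biUnion.2 ⟨b, hufin.mem_toFinset.2 hb, ?_⟩
    have hab' : n a ≤ 2 * n b := by exact_mod_cast hab
    simp only [Finset.mem_coe, mem_block] at hya hyb
    simp only [Fintype.mem_piFinset, Finset.mem_Ico]
    intro j
    have h1 := hya j
    have h2 := hyb j
    omega
  have hcard : (P.card : ℝ) ≤ ∑ b ∈ V, (3 * (n b : ℝ)) ^ d := by
    have h1 : P.card ≤ ∑ b ∈ V, (3 * n b) ^ d := by
      refine (Finset.card_le_card hPcov).trans (Finset.card_biUnion_le.trans ?_)
      refine Finset.sum_le_sum fun b _ => ?_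
      rw [Fintype.card_piFinset]
      refine (Finset.prod_le_pow_card _ _ (3 * n b) fun j _ => ?_).trans (by simp)
      rw [Nat.card_Ico]
      omega
    exact_mod_cast h1
  calc lam * P.card ≤ lam * ∑ b ∈ V, (3 * (n b : ℝ)) ^ d := by gcongr
    _ = 3 ^ d * ∑ b ∈ V, lam * (n b : ℝ) ^ d := by
        rw [Finset.mul_sum, Finset.mul_sum]
        refine Finset.sum_congr rfl fun b _ => ?_
        rw [mul_pow]
        ring
    _ ≤ 3 ^ d * ∑ b ∈ V, ∑ y ∈ block b (n b), ψ y := by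
        gcongr with b hb
        exact hsum b (hVP hb)
    _ = 3 ^ d * ∑ y ∈ V.biUnion fun b => block b (n b), ψ y := by
        rw [Finset.sum_biUnion]
        intro a ha b hb hab
        exact Finset.disjoint_coe.1
          (hdisj (hufin.mem_toFinset.1 ha) (hufin.mem_toFinset.1 hb) hab)
    _ ≤ 3 ^ d * ∑ y ∈ cube d (M + N), ψ y := by
        gcongr
        · exact fun y _ _ => hψ y
        · intro y hy
          obtain ⟨b, hb, hyb⟩ := Finset.mem_biUnion.1 hy
          have hbM := mem_cube.1 (hP (hVP hb))
          have hbN := hnN b (hVP hb)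
          simp only [mem_block, mem_cube] at hyb ⊢
          intro j
          have := hyb j
          have := hbM j
          omega

/-- The sum of `φ` along the cube `Λ_n` in the orbit of `x`. -/
def cubeSum (φ : Config A d → ℝ) (n : ℕ) (x : Config A d) : ℝ := ∑ c ∈ cube d n, φ (shift c x)

theorem measurable_cubeSum {φ : Config A d → ℝ} (hφ : Measurable φ) (n : ℕ) :
    Measurable (cubeSum φ n) :=
  Finset.measurable_sum _ fun c _ => hφ.comp (measurable_shift c)

theorem cubeSum_shift (φ : Config A d → ℝ) (n : ℕ) (r : Site d) (x : Config A d) :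
    cubeSum φ n (shift r x) = ∑ y ∈ block r n, φ (shift y x) := by
  simp only [cubeSum, shift_shift]
  exact (sum_block (fun y => φ (shift y x)) r n).symm

theorem Stationary.integral_cubeSum {μ : Measure (Config A d)} (hμ : Stationary μ)
    {φ : Config A d → ℝ} (hφ : Measurable φ) (hfi : Integrable φ μ) (n : ℕ) :
    ∫ x, cubeSum φ n x ∂μ = (n : ℝ) ^ d * ∫ x, φ x ∂μ := by
  simp only [cubeSum]
  rw [integral_finsetSum (f := fun c x => φ (shift c x)) _ fun c _ =>
    (hμ.measurePreserving c).integrable_comp_of_integrable hfi]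
  simp only [hμ.integral_comp_shift _ hφ]
  rw [Finset.sum_const, card_cube, nsmul_eq_mul]
  push_cast
  rfl

theorem Stationary.integrable_cubeSum {μ : Measure (Config A d)} (hμ : Stationary μ)
    {φ : Config A d → ℝ} (hfi : Integrable φ μ) (n : ℕ) : Integrable (cubeSum φ n) μ :=
  integrable_finsetSum _ fun c _ => (hμ.measurePreserving c).integrable_comp_of_integrable hfi

/-- Maximal inequality for averages over cubes of bounded size. -/
theorem Stationary.maximal_inequality_of_le {μ : Measure (Config A d)} [IsProbabilityMeasure μ]
    (hμ : Stationary μ) {φ : Config A d → ℝ} (hφ : Measurable φ) (hφ0 : ∀ x, 0 ≤ φ x)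
    (hfi : Integrable φ μ) {lam : ℝ} (hlam : 0 ≤ lam) {N : ℕ} (hN : 0 < N) :
    lam * μ.real {x | ∃ n, 0 < n ∧ n ≤ N ∧ lam * (n : ℝ) ^ d < cubeSum φ n x} ≤
      6 ^ d * ∫ x, φ x ∂μ := by
  classical
  set G : Set (Config A d) := {x | ∃ n, 0 < n ∧ n ≤ N ∧ lam * (n : ℝ) ^ d < cubeSum φ n x} with hG
  have hGmeas : MeasurableSet G := by
    have : G = ⋃ n : ℕ, ⋃ _ : 0 < n ∧ n ≤ N, {x | lam * (n : ℝ) ^ d < cubeSum φ n x} := by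
      ext x
      simp [hG, and_assoc]
    rw [this]
    exact MeasurableSet.iUnion fun n => MeasurableSet.iUnion fun _ =>
      measurableSet_lt measurable_const (measurable_cubeSum hφ n)
  set g : Config A d → ℝ := G.indicator fun _ => 1 with hg
  have hgmeas : Measurable g := measurable_const.indicator hGmeas
  have hgint : Integrable g μ := (integrable_const (1 : ℝ)).indicator hGmeas
  have hpt : ∀ x, lam * cubeSum g N x ≤ 3 ^ d * cubeSum φ (N + N) x := by
    intro x
    have hcount : cubeSum g N x = ((cube d N).filter fun c => shift c x ∈ G).card := by
      simp only [cubeSum, hg, Set.indicator_apply, Finset.sum_boole]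
    rw [hcount]
    have hex : ∀ c : Site d, ∃ n : ℕ, shift c x ∈ G →
        0 < n ∧ n ≤ N ∧ lam * (n : ℝ) ^ d < cubeSum φ n (shift c x) := fun c => by
      by_cases hc : shift c x ∈ G
      · obtain ⟨n, hn⟩ := hc
        exact ⟨n, fun _ => hn⟩
      · exact ⟨0, fun h => absurd h hc⟩
    choose n hn using hex
    refine card_mul_le_of_block_sums (ψ := fun y => φ (shift y x)) (fun _ => hφ0 _) hlam
      (Finset.filter_subset _ _) n ?_ ?_ ?_
    · exact fun c hc => (hn c (Finset.mem_filter.1 hc).2).1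
    · exact fun c hc => (hn c (Finset.mem_filter.1 hc).2).2.1
    · intro c hc
      rw [← cubeSum_shift]
      exact (hn c (Finset.mem_filter.1 hc).2).2.2.le
  have hintle := integral_mono ((hμ.integrable_cubeSum hgint N).const_mul lam)
    ((hμ.integrable_cubeSum hfi (N + N)).const_mul (3 ^ d)) hpt
  rw [integral_const_mul, integral_const_mul, hμ.integral_cubeSum hgmeas hgint,
    hμ.integral_cubeSum hφ hfi, hg, integral_indicator_const _ hGmeas] at hintle
  have hNpos : (0 : ℝ) < (N : ℝ) ^ d := by positivity
  refine le_of_mul_le_mul_left ?_ hNpos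
  have h6 : (6 : ℝ) ^ d = 3 ^ d * 2 ^ d := by rw [← mul_pow]; norm_num
  have h2 : ((N + N : ℕ) : ℝ) ^ d = 2 ^ d * (N : ℝ) ^ d := by
    rw [← mul_pow]
    push_cast
    ring
  rw [h2, smul_eq_mul, mul_one] at hintle
  rw [h6]
  linarith

theorem Stationary.maximal_inequality {μ : Measure (Config A d)} [IsProbabilityMeasure μ]
    (hμ : Stationary μ) {φ : Config A d → ℝ} (hφ : Measurable φ) (hφ0 : ∀ x, 0 ≤ φ x)
    (hfi : Integrable φ μ) {lam : ℝ} (hlam : 6 ^ d * ∫ x, φ x ∂μ < lam) :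
    μ {x | ∃ᶠ n : ℕ in atTop, lam * (n : ℝ) ^ d < cubeSum φ n x} < 1 := by
  have hI : 0 ≤ 6 ^ d * ∫ x, φ x ∂μ := mul_nonneg (by positivity) (integral_nonneg hφ0)
  have hlam0 : 0 < lam := hI.trans_lt hlam
  set G : ℕ → Set (Config A d) := fun N =>
    {x | ∃ n, 0 < n ∧ n ≤ N + 1 ∧ lam * (n : ℝ) ^ d < cubeSum φ n x} with hG
  have hmono : Monotone G := fun a b hab x ⟨n, h0, h1, h2⟩ => ⟨n, h0, by omega, h2⟩
  have hsub : {x | ∃ᶠ n : ℕ in atTop, lam * (n : ℝ) ^ d < cubeSum φ n x} ⊆ ⋃ N, G N := by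
    intro x hx
    obtain ⟨n, hn, hx⟩ := (frequently_atTop.1 hx) 1
    exact Set.mem_iUnion.2 ⟨n, n, hn, by omega, hx⟩
  refine (measure_mono hsub).trans_lt ?_
  have hle : ∀ N, μ (G N) ≤ ENNReal.ofReal ((6 ^ d * ∫ x, φ x ∂μ) / lam) := fun N => by
    rw [← ofReal_measureReal]
    refine ENNReal.ofReal_le_ofReal ?_
    rw [le_div_iff₀ hlam0, mul_comm]
    exact hμ.maximal_inequality_of_le hφ hφ0 hfi hlam0.le (Nat.succ_pos N)
  rw [hmono.measure_iUnion]
  refine (iSup_le hle).trans_lt ?_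
  rw [ENNReal.ofReal_lt_one, div_lt_one hlam0]
  exact hlam

/-- A nonnegative function of small mean has small averages over large cubes. -/
theorem ErgodicShift.eventually_cubeSum_le {μ : Measure (Config A d)} [IsProbabilityMeasure μ]
    (hμ : ErgodicShift μ) {φ : Config A d → ℝ} (hφ : Measurable φ) (hφ0 : ∀ x, 0 ≤ φ x)
    (hfi : Integrable φ μ) {lam : ℝ} (hlam : 12 ^ d * ∫ x, φ x ∂μ < lam) :
    ∀ᵐ x ∂μ, ∀ᶠ n : ℕ in atTop, cubeSum φ n x ≤ lam * (n : ℝ) ^ d := by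
  have hlam0 : 0 < lam :=
    (mul_nonneg (by positivity) (integral_nonneg hφ0) : 0 ≤ 12 ^ d * ∫ x, φ x ∂μ).trans_lt hlam
  set E : Site d → Set (Config A d) := fun r =>
    {x | ∃ᶠ n : ℕ in atTop, lam * (n : ℝ) ^ d < cubeSum φ n (shift r x)} with hE
  have hEmeas : ∀ r, MeasurableSet (E r) := fun r => by
    have : E r = ⋂ a : ℕ, ⋃ n : ℕ, ⋃ _ : a ≤ n,
        {x | lam * (n : ℝ) ^ d < cubeSum φ n (shift r x)} := by
      ext x
      simp [hE, frequently_atTop]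
    rw [this]
    exact MeasurableSet.iInter fun a => MeasurableSet.iUnion fun n => MeasurableSet.iUnion fun _ =>
      measurableSet_lt measurable_const ((measurable_cubeSum hφ n).comp (measurable_shift r))
  have hsub : (⋃ r, E r) ⊆
      {x | ∃ᶠ n : ℕ in atTop, lam / 2 ^ d * (n : ℝ) ^ d < cubeSum φ n x} := by
    intro x hx
    obtain ⟨r, hr⟩ := Set.mem_iUnion.1 hx
    refine frequently_atTop.2 fun a => ?_
    set R : ℕ := ∑ j, r j with hR
    obtain ⟨n, hn, hlt⟩ := (frequently_atTop.1 hr) (max a R)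
    refine ⟨n + R, by omega, ?_⟩
    have hle : cubeSum φ n (shift r x) ≤ cubeSum φ (n + R) x := by
      rw [cubeSum_shift]
      refine Finset.sum_le_sum_of_subset_of_nonneg ?_ fun y _ _ => hφ0 _
      intro y hy
      simp only [mem_block, mem_cube] at hy ⊢
      intro j
      have h1 := hy j
      have h2 : r j ≤ R := Finset.single_le_sum (f := r) (fun _ _ => Nat.zero_le _)
        (Finset.mem_univ j)
      omega
    refine lt_of_le_of_lt ?_ (hlt.trans_le hle)
    rw [div_mul_eq_mul_div, div_le_iff₀ (by positivity), mul_assoc, ← mul_pow]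
    have : ((n + R : ℕ) : ℝ) ≤ n * 2 := by
      have : n + R ≤ n * 2 := by omega
      exact_mod_cast this
    gcongr
  have hlt : μ (⋃ r, E r) < 1 := by
    refine (measure_mono hsub).trans_lt (hμ.1.maximal_inequality hφ hφ0 hfi ?_)
    rw [lt_div_iff₀ (by positivity)]
    have h12 : (12 : ℝ) ^ d = 6 ^ d * 2 ^ d := by rw [← mul_pow]; norm_num
    rw [h12] at hlam
    linarith
  have hzero : μ (⋃ r, E r) = 0 := by
    refine (hμ.measure_eq_zero_or_one (MeasurableSet.iUnion hEmeas) fun u => ?_).resolve_right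
      hlt.ne
    refine LE.le.eventuallyLE ?_
    intro x hx
    obtain ⟨r, hr⟩ := Set.mem_iUnion.1 hx
    refine Set.mem_iUnion.2 ⟨r + u, ?_⟩
    simpa only [hE, Set.mem_ofPred_eq, shift_shift] using hr
  filter_upwards [measure_eq_zero_iff_ae_notMem.1 hzero] with x hx
  have h0 : x ∉ E 0 := fun h => hx (Set.mem_iUnion.2 ⟨0, h⟩)
  have h1 : shift 0 x = x := rfl
  simpa only [hE, Set.mem_ofPred_eq, not_frequently, not_lt, h1] using h0

theorem grid_injective {m l : ℕ} {v : Site d} :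
    Function.Injective fun (p : (Fin d → Fin l) × (Fin d → Fin m)) (j : Fin d) =>
      v j + m * (p.1 j : ℕ) + (p.2 j : ℕ) := by
  rintro ⟨b, i⟩ ⟨b', i'⟩ heq
  have key : ∀ j, b j = b' j ∧ i j = i' j := fun j => by
    have hj : v j + m * (b j : ℕ) + (i j : ℕ) = v j + m * (b' j : ℕ) + (i' j : ℕ) :=
      congrFun heq j
    have hm : 0 < m := (Nat.zero_le _).trans_lt (i j).isLt
    have h1 : m * (b j : ℕ) + (i j : ℕ) = m * (b' j : ℕ) + (i' j : ℕ) := by omega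
    have hdiv := congrArg (· / m) h1
    simp only [Nat.mul_add_div hm, Nat.div_eq_of_lt (i j).isLt, Nat.div_eq_of_lt (i' j).isLt,
      add_zero] at hdiv
    rw [hdiv] at h1
    exact ⟨Fin.ext hdiv, Fin.ext (by omega)⟩
  exact Prod.ext (funext fun j => (key j).1) (funext fun j => (key j).2)

theorem grid_lt {m l : ℕ} (b : Fin l) (i : Fin m) : m * (b : ℕ) + (i : ℕ) < m * l := by
  have h1 : m * ((b : ℕ) + 1) ≤ m * l := Nat.mul_le_mul_left m b.isLt
  have h2 := i.isLt
  rw [mul_add, mul_one] at h1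
  omega

/-- The position of site `i` of the `b`-th `m`-block in a grid with origin `s` inside `Λ_k`. -/
def gridPos {m l k : ℕ} {s : Site d} (hs : ∀ j, s j + m * l ≤ k)
    (p : (Fin d → Fin l) × (Fin d → Fin m)) : Fin d → Fin k :=
  fun j => ⟨s j + m * (p.1 j : ℕ) + (p.2 j : ℕ), by
    have := grid_lt (p.1 j) (p.2 j)
    have := hs j
    omega⟩

theorem gridPos_injective {m l k : ℕ} {s : Site d} (hs : ∀ j, s j + m * l ≤ k) :
    Function.Injective (gridPos hs) := fun _ _ h =>
  grid_injective (v := s) (funext fun j => congrArg Fin.val (congrFun h j))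

/-- Kraft-type bound: few words have short total code length along a grid of `m`-blocks. -/
theorem card_le_rpow_of_code_length {m l k : ℕ} {s : Site d} (hA : 2 ≤ A)
    (hs : ∀ j, s j + m * l ≤ k) {q : Word A d m → ℝ} (hq0 : ∀ w, 0 < q w) (hq1 : ∑ w, q w = 1)
    {C : ℝ} {W : Finset (Word A d k)}
    (hW : ∀ w ∈ W,
      ∑ b : Fin d → Fin l, -Real.logb A (q fun i => w (gridPos hs (b, i))) ≤ C) :
    (W.card : ℝ) ≤ (A : ℝ) ^ (C + ((k : ℝ) ^ d - ((m * l : ℕ) : ℝ) ^ d)) := by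
  classical
  have hA0 : (0 : ℝ) < A := by positivity
  have hA1 : (1 : ℝ) < A := by exact_mod_cast hA
  set D := {p : Fin d → Fin k // p ∉ Set.range (gridPos hs)} with hD
  have hDcard : (Fintype.card D : ℝ) = (k : ℝ) ^ d - ((m * l : ℕ) : ℝ) ^ d := by
    have h1 : Fintype.card D + l ^ d * m ^ d = k ^ d := by
      have h2 := Fintype.card_subtype_compl (fun p => p ∈ Set.range (gridPos hs))
      have h3 : Fintype.card {p // p ∈ Set.range (gridPos hs)} = l ^ d * m ^ d := by
        rw [← Fintype.card_congr (Equiv.ofInjective _ (gridPos_injective hs))]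
        simp
      have h4 := Fintype.card_subtype_le (fun p => p ∈ Set.range (gridPos hs))
      rw [h3] at h2 h4
      simp only [Fintype.card_pi, Fintype.card_fin, Finset.prod_const, Finset.card_univ] at h2 h4
      change Fintype.card D = _ at h2
      omega
    have h5 : (Fintype.card D : ℝ) + (l : ℝ) ^ d * (m : ℝ) ^ d = (k : ℝ) ^ d := by
      exact_mod_cast h1
    push_cast
    rw [mul_pow]
    linarith
  set Φ : Word A d k → ((Fin d → Fin l) → Word A d m) × (D → Fin A) := fun w =>
    (fun b i => w (gridPos hs (b, i)), fun p => w p.1) with hΦ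
  have hΦinj : Function.Injective Φ := by
    intro w w' h
    funext p
    by_cases hp : p ∈ Set.range (gridPos hs)
    · obtain ⟨⟨b, i⟩, rfl⟩ := hp
      exact congrFun (congrFun (congrArg Prod.fst h) b) i
    · exact congrFun (congrArg Prod.snd h) ⟨p, hp⟩
  have hprod : ∀ w ∈ W, (A : ℝ) ^ (-C) ≤ ∏ b, q ((Φ w).1 b) := by
    intro w hw
    have h1 := hW w hw
    have h2 : Real.logb A (∏ b, q ((Φ w).1 b)) = ∑ b, Real.logb A (q ((Φ w).1 b)) :=
      Real.logb_prod _ _ fun b _ => (hq0 _).ne'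
    rw [← Real.le_logb_iff_rpow_le hA1 (Finset.prod_pos fun b _ => hq0 _), h2]
    rw [Finset.sum_neg_distrib] at h1
    simp only [hΦ]
    linarith
  have htotal : ∑ y : ((Fin d → Fin l) → Word A d m) × (D → Fin A), ∏ b, q (y.1 b) =
      (A : ℝ) ^ Fintype.card D := by
    rw [Fintype.sum_prod_type_right]
    have h1 : ∑ y : (Fin d → Fin l) → Word A d m, ∏ b, q (y b) = 1 := by
      rw [← Fintype.prod_sum fun (_ : Fin d → Fin l) (w : Word A d m) => q w]
      simp [hq1]
    simp only [h1]
    simp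
  have hmain : (W.card : ℝ) * (A : ℝ) ^ (-C) ≤ (A : ℝ) ^ Fintype.card D := by
    calc (W.card : ℝ) * (A : ℝ) ^ (-C) = ∑ _w ∈ W, (A : ℝ) ^ (-C) := by
          rw [Finset.sum_const, nsmul_eq_mul]
      _ ≤ ∑ w ∈ W, ∏ b, q ((Φ w).1 b) := Finset.sum_le_sum hprod
      _ = ∑ y ∈ W.image Φ, ∏ b, q (y.1 b) := by
          rw [Finset.sum_image fun _ _ _ _ h => hΦinj h]
      _ ≤ ∑ y : ((Fin d → Fin l) → Word A d m) × (D → Fin A), ∏ b, q (y.1 b) :=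
          Finset.sum_le_sum_of_subset_of_nonneg (Finset.subset_univ _)
            fun y _ _ => Finset.prod_nonneg fun b _ => (hq0 _).le
      _ = _ := htotal
  rw [← hDcard, Real.rpow_add hA0, Real.rpow_natCast]
  rw [Real.rpow_neg hA0.le, ← div_eq_mul_inv, div_le_iff₀ (by positivity)] at hmain
  linarith

theorem entH_nonneg (A : ℕ) {W : Type*} [Fintype W] {p : W → ℝ} (hp0 : ∀ w, 0 ≤ p w)
    (hp1 : ∀ w, p w ≤ 1) : 0 ≤ entH A p := by
  rw [entH, ← Finset.sum_neg_distrib]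
  refine Finset.sum_nonneg fun w _ => ?_
  have h1 : Real.logb A (p w) ≤ 0 :=
    div_nonpos_of_nonpos_of_nonneg (Real.log_nonpos (hp0 w) (hp1 w)) (Real.log_natCast_nonneg A)
  nlinarith [hp0 w]

/-- Any probability vector has a strictly positive code whose mean length exceeds the entropy by
at most one. -/
theorem exists_pos_code_le_entH_add_one (hA : 2 ≤ A) {W : Type*} [Fintype W] [Nonempty W]
    {p : W → ℝ} (hp0 : ∀ w, 0 ≤ p w) (hp1 : ∑ w, p w = 1) :
    ∃ q : W → ℝ, (∀ w, 0 < q w) ∧ ∑ w, q w = 1 ∧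
      ∑ w, p w * -Real.logb A (q w) ≤ entH A p + 1 := by
  have hA1 : (1 : ℝ) < A := by exact_mod_cast hA
  have hcard : (0 : ℝ) < Fintype.card W := by exact_mod_cast Fintype.card_pos
  refine ⟨fun w => (p w + 1 / Fintype.card W) / 2, fun w => ?_, ?_, ?_⟩
  · have := hp0 w
    positivity
  · rw [← Finset.sum_div, Finset.sum_add_distrib, hp1, Finset.sum_const, Finset.card_univ,
      nsmul_eq_mul, mul_one_div_cancel hcard.ne']
    norm_num
  · rw [entH, ← Finset.sum_neg_distrib]
    conv_rhs => rw [← hp1]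
    rw [← Finset.sum_add_distrib]
    refine Finset.sum_le_sum fun w _ => ?_
    rcases (hp0 w).eq_or_lt with h | h
    · simp [← h]
    · have h2 : Real.logb A 2 ≤ 1 := by
        rw [Real.logb_le_iff_le_rpow hA1 (by norm_num), Real.rpow_one]
        exact_mod_cast hA
      have h3 : Real.logb A (p w / 2) ≤ Real.logb A ((p w + 1 / Fintype.card W) / 2) := by
        refine Real.logb_le_logb_of_le hA1 (by positivity) ?_
        have : 0 ≤ 1 / (Fintype.card W : ℝ) := by positivity
        linarith
      rw [Real.logb_div h.ne' (by norm_num)] at h3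
      nlinarith

theorem integral_wordAt {μ : Measure (Config A d)} [IsProbabilityMeasure μ] (m : ℕ)
    (G : Word A d m → ℝ) : ∫ x, G (wordAt x m 0) ∂μ = ∑ w, wordDist μ m w * G w := by
  have hm := measurable_wordAt (A := A) m (0 : Site d)
  have : IsProbabilityMeasure (μ.map fun x => wordAt x m 0) :=
    Measure.isProbabilityMeasure_map hm.aemeasurable
  rw [← integral_map (f := G) hm.aemeasurable (measurable_of_finite G).aestronglyMeasurable,
    integral_fintype (Integrable.of_finite)]
  refine Finset.sum_congr rfl fun w _ => ?_
  rw [smul_eq_mul, map_measureReal_apply hm (MeasurableSet.singleton w)]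
  rfl

theorem sum_wordDist {μ : Measure (Config A d)} [IsProbabilityMeasure μ] (m : ℕ) :
    ∑ w, wordDist μ m w = 1 := by
  have := integral_wordAt (μ := μ) m fun _ => 1
  simpa using this.symm

/-- The configuration that equals `w` on `Λ_k` and `a` elsewhere. -/
def extendWord (a : Fin A) {k : ℕ} (w : Word A d k) : Config A d := fun i =>
  if h : ∀ j, i j < k then w fun j => ⟨i j, h j⟩ else a

theorem wordAt_shift_extendWord (a : Fin A) {k m : ℕ} (w : Word A d k) {y : Site d}
    (hy : ∀ j, y j + m ≤ k) :
    wordAt (shift y (extendWord a w)) m 0 = fun i => w fun j => ⟨y j + (i j : ℕ), by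
      have := (i j).isLt
      have := hy j
      omega⟩ := by
  funext i
  have h : ∀ j, ((fun j => (0 : Site d) j + (i j : ℕ)) + y) j = y j + (i j : ℕ) := fun j => by
    simp [add_comm]
  have hlt : ∀ j, ((fun j => (0 : Site d) j + (i j : ℕ)) + y) j < k := fun j => by
    rw [h]
    have := (i j).isLt
    have := hy j
    omega
  simp only [wordAt, shift, extendWord]
  rw [dif_pos hlt]
  congr 1
  funext j
  exact Fin.ext (h j)

theorem wordAt_shift_extendWord_wordAt (a : Fin A) {k m : ℕ} (x : Config A d) (c : Site d)
    {y : Site d} (hy : ∀ j, y j + m ≤ k) :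
    wordAt (shift y (extendWord a (wordAt x k c))) m 0 = wordAt (shift y (shift c x)) m 0 := by
  rw [wordAt_shift_extendWord a _ hy]
  funext i
  simp only [wordAt, shift]
  congr 1
  funext j
  simp only [Pi.add_apply, Pi.zero_apply]
  omega

/-- A sum over a cube dominates the sum over a grid of `m`-blocks, so one of the grid offsets has
a small sum. -/
theorem exists_offset_sum_le {m l : ℕ} (hm : 0 < m) {ψ : Site d → ℝ} (hψ : ∀ c, 0 ≤ ψ c) {C : ℝ}
    (hC : ∑ e ∈ cube d (m * l), ψ e ≤ C) :
    ∃ r : Fin d → Fin m,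
      ∑ b : Fin d → Fin l, ψ (fun j => m * (b j : ℕ) + (r j : ℕ)) ≤ C / (m : ℝ) ^ d := by
  classical
  have : NeZero m := ⟨hm.ne'⟩
  by_contra! hcon
  have hinj := grid_injective (d := d) (m := m) (l := l) (v := 0)
  simp only [Pi.zero_apply, zero_add] at hinj
  have h1 : ∑ r : Fin d → Fin m, ∑ b : Fin d → Fin l,
      ψ (fun j => m * (b j : ℕ) + (r j : ℕ)) ≤ ∑ e ∈ cube d (m * l), ψ e := by
    rw [← Fintype.sum_prod_type_right
      (f := fun p : (Fin d → Fin l) × (Fin d → Fin m) =>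
        ψ (fun j => m * (p.1 j : ℕ) + (p.2 j : ℕ))),
      ← Finset.sum_image (f := ψ) (s := Finset.univ)
      (g := fun (p : (Fin d → Fin l) × (Fin d → Fin m)) (j : Fin d) =>
        m * (p.1 j : ℕ) + (p.2 j : ℕ)) fun _ _ _ _ h => hinj h]
    refine Finset.sum_le_sum_of_subset_of_nonneg ?_ fun c _ _ => hψ c
    intro e he
    obtain ⟨p, -, rfl⟩ := Finset.mem_image.1 he
    exact mem_cube.2 fun j => grid_lt (p.1 j) (p.2 j)
  have h2 : ∑ _r : Fin d → Fin m, C / (m : ℝ) ^ d < ∑ r : Fin d → Fin m, ∑ b : Fin d → Fin l,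
      ψ (fun j => m * (b j : ℕ) + (r j : ℕ)) :=
    Finset.sum_lt_sum_of_nonempty Finset.univ_nonempty fun r _ => hcon r
  have h3 : ∑ _r : Fin d → Fin m, C / (m : ℝ) ^ d = C := by
    rw [Finset.sum_const, nsmul_eq_mul, Finset.card_univ]
    simp only [Fintype.card_pi, Fintype.card_fin, Finset.prod_const, Finset.card_univ]
    push_cast
    exact mul_div_cancel₀ _ (by positivity)
  linarith

/-- Deviation from `H` of a weighted average of translates of the word function `G`. -/
def deviation {ι : Type} [Fintype ι] (a : ι → ℝ) (s : ι → Site d) {m : ℕ}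
    (G : Word A d m → ℝ) (H : ℝ) (x : Config A d) : ℝ :=
  |∑ i, a i * G (wordAt (shift (s i) x) m 0) - H|

theorem cubeSum_deviation_extendWord {ι : Type} [Fintype ι] (a : ι → ℝ) {s : ι → Site d} {m : ℕ}
    (G : Word A d m → ℝ) (H : ℝ) {R : ℕ} (hs : ∀ i j, s i j ≤ R) (a0 : Fin A) (k : ℕ)
    (x : Config A d) (c : Site d) :
    cubeSum (deviation a s G H) (k - (R + m)) (extendWord a0 (wordAt x k c)) =
      cubeSum (deviation a s G H) (k - (R + m)) (shift c x) := by
  refine Finset.sum_congr rfl fun e he => ?_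
  simp only [deviation]
  congr 2
  refine Finset.sum_congr rfl fun i _ => ?_
  rw [shift_shift, shift_shift (s i) e, wordAt_shift_extendWord_wordAt]
  intro j
  have h1 := mem_cube.1 he j
  have h2 := hs i j
  simp only [Pi.add_apply]
  omega

/-- Words along which a code of mean length `H` has small deviation are few. -/
theorem card_small_deviation_le {ι : Type} [Fintype ι] {a : ι → ℝ} {s : ι → Site d} {m : ℕ}
    (hA : 2 ≤ A) (hm : 0 < m) (ha0 : ∀ i, 0 ≤ a i) (ha1 : ∑ i, a i = 1)
    {q : Word A d m → ℝ} (hq0 : ∀ w, 0 < q w) (hq1 : ∑ w, q w = 1) {H τ : ℝ} (hH : 0 ≤ H)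
    {R : ℕ} (hs : ∀ i j, s i j ≤ R) (a0 : Fin A) {k : ℕ} (hk : 2 * R + m ≤ k)
    {T : Finset (Word A d k)}
    (hT : ∀ w ∈ T, cubeSum (deviation a s (fun w => -Real.logb A (q w)) H) (k - (R + m))
      (extendWord a0 w) ≤ τ * (k : ℝ) ^ d) :
    (T.card : ℝ) ≤ (m : ℝ) ^ d * (A : ℝ) ^ ((H + τ) * (k : ℝ) ^ d / (m : ℝ) ^ d +
      ((k : ℝ) ^ d - ((m * ((k - (2 * R + m)) / m) : ℕ) : ℝ) ^ d)) := by
  classical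
  set l := (k - (2 * R + m)) / m with hl
  set L := k - (R + m) with hL
  have hml : m * l ≤ k - (2 * R + m) := Nat.mul_div_le _ _
  have hgrid : ∀ r : Fin d → Fin m, ∀ j, (R + (r j : ℕ)) + m * l ≤ k := fun r j => by
    have := (r j).isLt
    omega
  set G : Word A d m → ℝ := fun w => -Real.logb A (q w) with hG
  have hG0 : ∀ w, 0 ≤ G w := fun w => by
    have hle : q w ≤ 1 := by
      rw [← hq1]
      exact Finset.single_le_sum (fun w _ => (hq0 w).le) (Finset.mem_univ w)
    have : Real.logb A (q w) ≤ 0 :=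
      div_nonpos_of_nonpos_of_nonneg (Real.log_nonpos (hq0 w).le hle) (Real.log_natCast_nonneg A)
    simp only [hG]
    linarith
  set C : ℝ := (H + τ) * (k : ℝ) ^ d / (m : ℝ) ^ d with hC
  set W : (Fin d → Fin m) → Finset (Word A d k) := fun r => Finset.univ.filter fun w =>
    ∑ b : Fin d → Fin l, G (fun i => w (gridPos (hgrid r) (b, i))) ≤ C with hW
  have hcover : T ⊆ Finset.univ.biUnion W := by
    intro w hw
    set ψ : Site d → ℝ := fun y => G (wordAt (shift y (extendWord a0 w)) m 0) with hψ
    have hψ0 : ∀ y, 0 ≤ ψ y := fun y => hG0 _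
    have hsum1 : ∑ i, a i * ∑ y ∈ block (s i) L, ψ y ≤ (H + τ) * (k : ℝ) ^ d := by
      have h1 : ∑ i, a i * ∑ y ∈ block (s i) L, ψ y =
          ∑ c ∈ cube d L, ∑ i, a i * G (wordAt (shift (s i) (shift c (extendWord a0 w))) m 0) := by
        rw [Finset.sum_comm]
        refine Finset.sum_congr rfl fun i _ => ?_
        rw [← Finset.mul_sum, sum_block]
        simp only [hψ, shift_shift, add_comm]
      have h2 : ∑ c ∈ cube d L, ∑ i,
          a i * G (wordAt (shift (s i) (shift c (extendWord a0 w))) m 0) ≤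
          ∑ c ∈ cube d L, (deviation a s G H (shift c (extendWord a0 w)) + H) := by
        refine Finset.sum_le_sum fun c _ => ?_
        have := le_abs_self
          (∑ i, a i * G (wordAt (shift (s i) (shift c (extendWord a0 w))) m 0) - H)
        simp only [deviation]
        linarith
      rw [Finset.sum_add_distrib, Finset.sum_const, card_cube, nsmul_eq_mul] at h2
      have h3 : ∑ c ∈ cube d L, deviation a s G H (shift c (extendWord a0 w)) ≤
          τ * (k : ℝ) ^ d := hT w hw
      have h4 : ((L ^ d : ℕ) : ℝ) ≤ (k : ℝ) ^ d := by
        exact_mod_cast Nat.pow_le_pow_left (Nat.sub_le _ _) d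
      have h5 := mul_le_mul_of_nonneg_right h4 hH
      rw [h1]
      linarith
    have hsum2 : ∑ y ∈ block (fun _ => R) (m * l), ψ y ≤
        ∑ i, a i * ∑ y ∈ block (s i) L, ψ y := by
      calc ∑ y ∈ block (fun _ => R) (m * l), ψ y
          = ∑ i, a i * ∑ y ∈ block (fun _ => R) (m * l), ψ y := by
            rw [← Finset.sum_mul, ha1, one_mul]
        _ ≤ _ := by
            refine Finset.sum_le_sum fun i _ => mul_le_mul_of_nonneg_left ?_ (ha0 i)
            refine Finset.sum_le_sum_of_subset_of_nonneg ?_ fun y _ _ => hψ0 y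
            intro y hy
            simp only [mem_block] at hy ⊢
            intro j
            have h1 := hy j
            have h2 := hs i j
            omega
    rw [sum_block] at hsum2
    obtain ⟨r, hr⟩ := exists_offset_sum_le hm (fun c => hψ0 (c + fun _ => R))
      (hsum2.trans hsum1)
    refine Finset.mem_biUnion.2 ⟨r, Finset.mem_univ _, ?_⟩
    simp only [hW, Finset.mem_filter, Finset.mem_univ, true_and]
    refine le_trans (le_of_eq (Finset.sum_congr rfl fun b _ => ?_)) hr
    simp only [hψ]
    rw [wordAt_shift_extendWord a0 w (fun j => ?_)]
    · congr 1
      funext i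
      congr 1
      funext j
      refine Fin.ext ?_
      simp only [gridPos, Pi.add_apply]
      omega
    · have h2 := (r j).isLt
      have h3 : m * ((b j : ℕ) + 1) ≤ m * l := Nat.mul_le_mul_left m (b j).isLt
      rw [mul_add, mul_one] at h3
      simp only [Pi.add_apply]
      omega
  have hcard : T.card ≤ ∑ r, (W r).card := (Finset.card_le_card hcover).trans Finset.card_biUnion_le
  calc (T.card : ℝ) ≤ ∑ r : Fin d → Fin m, ((W r).card : ℝ) := by exact_mod_cast hcard
    _ ≤ ∑ _r : Fin d → Fin m,
        (A : ℝ) ^ (C + ((k : ℝ) ^ d - ((m * l : ℕ) : ℝ) ^ d)) := by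
        refine Finset.sum_le_sum fun r _ => ?_
        exact card_le_rpow_of_code_length (s := fun j => R + (r j : ℕ)) hA (hgrid r) hq0 hq1
          fun w hw => (Finset.mem_filter.1 hw).2
    _ = _ := by simp

/-- If the orbit sum of a nonnegative function over `Λ_n` is small, then only few members of a
packing of `Λ_n` by `k`-blocks have a large block sum. -/
theorem card_mul_le_of_packing {ψ : Site d → ℝ} (hψ : ∀ c, 0 ≤ ψ c) {k L n : ℕ} (hL : L ≤ k)
    {F : Finset (Site d)} (hF : ∀ c ∈ F, ∀ j, c j + k ≤ n)
    (hdisj : ∀ c ∈ F, ∀ c' ∈ F, c ≠ c' → (∃ j, c j + k ≤ c' j ∨ c' j + k ≤ c j)) {t : ℝ}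
    (ht : ∀ c ∈ F, t ≤ ∑ y ∈ block c L, ψ y) :
    t * F.card ≤ ∑ y ∈ cube d n, ψ y := by
  classical
  calc t * F.card = ∑ _c ∈ F, t := by rw [Finset.sum_const, nsmul_eq_mul, mul_comm]
    _ ≤ ∑ c ∈ F, ∑ y ∈ block c L, ψ y := Finset.sum_le_sum ht
    _ = ∑ y ∈ F.biUnion fun c => block c L, ψ y := by
        rw [Finset.sum_biUnion]
        intro c hc c' hc' hne
        refine Finset.disjoint_left.2 fun y hy hy' => ?_
        obtain ⟨j, hj⟩ := hdisj c hc c' hc' hne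
        have h1 := mem_block.1 hy j
        have h2 := mem_block.1 hy' j
        omega
    _ ≤ _ := by
        refine Finset.sum_le_sum_of_subset_of_nonneg ?_ fun y _ _ => hψ y
        intro y hy
        obtain ⟨c, hc, hyc⟩ := Finset.mem_biUnion.1 hy
        refine mem_cube.2 fun j => ?_
        have h1 := mem_block.1 hyc j
        have h2 := hF c hc j
        omega

theorem tendsto_one_sub_pow_div (d D : ℕ) :
    Tendsto (fun k : ℕ => 1 - (((k - D : ℕ) : ℝ) / k) ^ d) atTop (𝓝 0) := by
  have h1 : Tendsto (fun k : ℕ => ((k - D : ℕ) : ℝ) / k) atTop (𝓝 1) := by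
    have h2 : Tendsto (fun k : ℕ => 1 - (D : ℝ) / k) atTop (𝓝 (1 - 0)) :=
      tendsto_const_nhds.sub (tendsto_const_div_atTop_nhds_zero_nat (D : ℝ))
    rw [sub_zero] at h2
    refine h2.congr' ?_
    filter_upwards [eventually_ge_atTop (D + 1)] with k hk
    have hk0 : (k : ℝ) ≠ 0 := by
      have : 0 < k := by omega
      positivity
    rw [Nat.cast_sub (by omega), sub_div, div_self hk0]
  simpa using (tendsto_const_nhds (x := (1 : ℝ))).sub (h1.pow d)

/-- For every ergodic `μ` with entropy rate `h`, `δ, δ' > 0` and `β ∈ (0,1]`,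
for all large enough `k` there is a set `𝒯_k` of `k`-words of log-cardinality at most
`(h+δ)k^d` such that, almost surely, eventually in `n`: in every collection of pairwise
non-overlapping `k`-blocks inside `Λ_n` covering at least a `β`-fraction of `Λ_n`, at least a
`(1-δ')`-fraction of the blocks carry words from `𝒯_k`. -/
theorem typical_sampling_sets_for_packings
    (A d : ℕ) (hA : 2 ≤ A) (hd : 1 ≤ d)
    (μ : Measure (Config A d)) [IsProbabilityMeasure μ] (hμ : ErgodicShift μ)
    (h : ℝ) (hrate : HasEntropyRate μ h)
    (δ δ' β : ℝ) (hδ : 0 < δ) (hδ' : 0 < δ') (hβ0 : 0 < β) (hβ1 : β ≤ 1) :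
    ∃ k0 : ℕ, ∀ k ≥ k0, ∃ T : Set (Word A d k),
      Real.logb A (Set.ncard T) / (k : ℝ) ^ d ≤ h + δ ∧
      ∀ᵐ x ∂μ, ∃ n0 : ℕ, ∀ n ≥ n0,
        ∀ F : Finset (Site d),
          (∀ c ∈ F, ∀ j, c j + k ≤ n) →
          (∀ c ∈ F, ∀ c' ∈ F, c ≠ c' → (∃ j, c j + k ≤ c' j ∨ c' j + k ≤ c j)) →
          β * (n : ℝ) ^ d ≤ (F.card : ℝ) * (k : ℝ) ^ d →
          (1 - δ') * (F.card : ℝ) ≤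
            (Set.ncard {c : Site d | c ∈ F ∧ wordAt x k c ∈ T} : ℝ) := by
  classical
  have hA1 : (1 : ℝ) < A := by exact_mod_cast hA
  have hA0 : (0 : ℝ) < A := by positivity
  have hd0 : d ≠ 0 := by omega
  have : NeZero A := ⟨by omega⟩
  have hdist0 : ∀ n w, 0 ≤ wordDist μ n w := fun n w => ENNReal.toReal_nonneg
  have hent0 : ∀ n, 0 ≤ entH A (wordDist μ n) := fun n =>
    entH_nonneg A (hdist0 n) fun w => measureReal_le_one
  have hpowtop : Tendsto (fun n : ℕ => (n : ℝ) ^ d) atTop atTop :=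
    (tendsto_pow_atTop hd0).comp tendsto_natCast_atTop_atTop
  have hh0 : 0 ≤ h := ge_of_tendsto' hrate fun n => div_nonneg (hent0 n) (by positivity)
  obtain ⟨m, hm0, hmH, hm1⟩ : ∃ m : ℕ, 0 < m ∧
      entH A (wordDist μ m) / (m : ℝ) ^ d ≤ h + δ / 4 ∧ 1 / (m : ℝ) ^ d ≤ δ / 4 := by
    have h1 : ∀ᶠ n : ℕ in atTop, entH A (wordDist μ n) / (n : ℝ) ^ d ≤ h + δ / 4 :=
      hrate.eventually_le_const (by linarith)
    have h2 : ∀ᶠ n : ℕ in atTop, 1 / (n : ℝ) ^ d ≤ δ / 4 :=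
      (tendsto_const_nhds.div_atTop hpowtop).eventually_le_const (by linarith)
    obtain ⟨m, hm⟩ := ((eventually_gt_atTop 0).and (h1.and h2)).exists
    exact ⟨m, hm.1, hm.2.1, hm.2.2⟩
  have hmd : (1 : ℝ) ≤ (m : ℝ) ^ d := one_le_pow₀ (by exact_mod_cast hm0)
  obtain ⟨q, hq0, hq1, hqent⟩ :=
    exists_pos_code_le_entH_add_one hA (hdist0 m) (sum_wordDist (μ := μ) m)
  set G : Word A d m → ℝ := fun w => -Real.logb A (q w) with hG
  set f : Config A d → ℝ := fun x => G (wordAt x m 0) with hf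
  have hfmeas : Measurable f := (measurable_of_finite G).comp (measurable_wordAt m 0)
  set H : ℝ := ∫ x, f x ∂μ with hH
  have hG0 : ∀ w, 0 ≤ G w := fun w => by
    have hle : q w ≤ 1 := by
      rw [← hq1]
      exact Finset.single_le_sum (fun w _ => (hq0 w).le) (Finset.mem_univ w)
    have : Real.logb A (q w) ≤ 0 :=
      div_nonpos_of_nonpos_of_nonneg (Real.log_nonpos (hq0 w).le hle) (Real.log_natCast_nonneg A)
    simp only [hG]
    linarith
  have hH0 : 0 ≤ H := integral_nonneg fun x => hG0 _
  have hHle : H / (m : ℝ) ^ d ≤ h + δ / 2 := by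
    have h1 : H ≤ entH A (wordDist μ m) + 1 := by
      rw [hH, hf, integral_wordAt]
      exact hqent
    calc H / (m : ℝ) ^ d ≤ (entH A (wordDist μ m) + 1) / (m : ℝ) ^ d := by gcongr
      _ = entH A (wordDist μ m) / (m : ℝ) ^ d + 1 / (m : ℝ) ^ d := add_div _ _ _
      _ ≤ h + δ / 2 := by linarith
  set τ : ℝ := δ / 8 with hτ
  have hτ0 : 0 < τ := by positivity
  set lam : ℝ := δ' * β * τ with hlam
  have hlam0 : 0 < lam := by positivity
  obtain ⟨ι, hι, a, s, ha0, ha1, hdev⟩ := hμ.exists_convex_combination_near_mean hfmeas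
    (C := ∑ w, |G w|) (fun x => Finset.single_le_sum (f := fun w => |G w|)
      (fun w _ => abs_nonneg _) (Finset.mem_univ _)) (ε := lam / (12 ^ d * 2)) (by positivity)
  set φ : Config A d → ℝ := deviation a s G H with hφ
  have hφ0 : ∀ x, 0 ≤ φ x := fun x => abs_nonneg _
  have hfint : Integrable f μ := by
    refine Integrable.of_bound hfmeas.aestronglyMeasurable (∑ w, |G w|) (ae_of_all _ fun x => ?_)
    exact Finset.single_le_sum (f := fun w => |G w|)
      (fun w _ => abs_nonneg _) (Finset.mem_univ _)
  have hφint : Integrable φ μ := by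
    refine (Integrable.sub (integrable_finsetSum _ fun i _ => Integrable.const_mul ?_ _)
      (integrable_const H)).abs
    exact (hμ.1.measurePreserving (s i)).integrable_comp_of_integrable hfint
  have hφmeas : Measurable φ := by
    refine continuous_abs.measurable.comp (Measurable.sub
      (Finset.measurable_sum _ fun i _ => Measurable.const_mul ?_ _) measurable_const)
    exact hfmeas.comp (measurable_shift (s i))
  have hφI : 12 ^ d * ∫ x, φ x ∂μ < lam := by
    have h1 : ∫ x, φ x ∂μ ≤ lam / (12 ^ d * 2) := hdev
    calc 12 ^ d * ∫ x, φ x ∂μ ≤ 12 ^ d * (lam / (12 ^ d * 2)) := by gcongr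
      _ = lam / 2 := by field_simp
      _ < lam := by linarith
  have hae := hμ.eventually_cubeSum_le hφmeas hφ0 hφint hφI
  set R : ℕ := ∑ i, ∑ j, s i j with hR
  have hsR : ∀ i j, s i j ≤ R := fun i j =>
    (Finset.single_le_sum (f := fun j => s i j) (fun _ _ => Nat.zero_le _)
      (Finset.mem_univ j)).trans
      (Finset.single_le_sum (f := fun i => ∑ j, s i j) (fun _ _ => Nat.zero_le _)
        (Finset.mem_univ i))
  have hev1 : ∀ᶠ k : ℕ in atTop, Real.logb A ((m : ℝ) ^ d) / (k : ℝ) ^ d ≤ δ / 8 :=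
    (tendsto_const_nhds.div_atTop hpowtop).eventually_le_const (by linarith)
  have hev2 : ∀ᶠ k : ℕ in atTop,
      1 - (((k - (2 * R + m + m) : ℕ) : ℝ) / k) ^ d ≤ δ / 8 :=
    (tendsto_one_sub_pow_div d (2 * R + m + m)).eventually_le_const (by linarith)
  obtain ⟨k0, hk0⟩ := eventually_atTop.1
    ((eventually_ge_atTop (2 * R + m)).and (hev1.and hev2))
  refine ⟨k0, fun k hk => ?_⟩
  obtain ⟨hkR, hk1, hk2⟩ := hk0 k hk
  have hkpos : 0 < k := by omega
  have hkd : (0 : ℝ) < (k : ℝ) ^ d := by positivity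
  set T : Finset (Word A d k) := Finset.univ.filter fun w =>
    cubeSum φ (k - (R + m)) (extendWord 0 w) ≤ τ * (k : ℝ) ^ d with hT
  refine ⟨(T : Set (Word A d k)), ?_, ?_⟩
  · rw [Set.ncard_coe_finset]
    rcases T.card.eq_zero_or_pos with hT0 | hTpos
    · rw [hT0]
      simp only [Nat.cast_zero, Real.logb_zero, zero_div]
      linarith
    have hcard := card_small_deviation_le hA hm0 ha0 ha1 hq0 hq1 hH0 hsR 0 hkR (τ := τ) (T := T)
      fun w hw => (Finset.mem_filter.1 hw).2
    set l : ℕ := (k - (2 * R + m)) / m with hl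
    have hlog := Real.logb_le_logb_of_le hA1 (by exact_mod_cast hTpos) hcard
    rw [Real.logb_mul (by positivity) (by positivity), Real.logb_rpow hA0 hA1.ne'] at hlog
    rw [div_le_iff₀ hkd]
    have h1 : Real.logb A ((m : ℝ) ^ d) ≤ δ / 8 * (k : ℝ) ^ d := (div_le_iff₀ hkd).1 hk1
    have h2 : (H + τ) * (k : ℝ) ^ d / (m : ℝ) ^ d ≤ (h + δ / 2 + δ / 8) * (k : ℝ) ^ d := by
      have h3 : τ / (m : ℝ) ^ d ≤ δ / 8 := div_le_self hτ0.le hmd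
      rw [mul_div_right_comm, add_div]
      gcongr
    have h4 : (k : ℝ) ^ d - ((m * l : ℕ) : ℝ) ^ d ≤ δ / 8 * (k : ℝ) ^ d := by
      have h5 : k - (2 * R + m + m) ≤ m * l := by
        have := Nat.div_add_mod (k - (2 * R + m)) m
        have := Nat.mod_lt (k - (2 * R + m)) hm0
        rw [← hl] at *
        omega
      have h6 : ((k - (2 * R + m + m) : ℕ) : ℝ) ^ d ≤ ((m * l : ℕ) : ℝ) ^ d := by
        exact_mod_cast Nat.pow_le_pow_left h5 d
      rw [div_pow, sub_le_iff_le_add, ← sub_le_iff_le_add', le_div_iff₀ hkd] at hk2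
      linarith
    linarith [mul_pos hδ hkd]
  · filter_upwards [hae] with x hx
    obtain ⟨n0, hn0⟩ := eventually_atTop.1 hx
    refine ⟨n0, fun n hn F hF hdisj hcov => ?_⟩
    have hsum := hn0 n hn
    have hncard : Set.ncard {c : Site d | c ∈ F ∧ wordAt x k c ∈ (T : Set (Word A d k))} =
        (F.filter fun c => wordAt x k c ∈ T).card := by
      rw [← Set.ncard_coe_finset]
      congr 1
      ext c
      simp
    have hsplit := Finset.card_filter_add_card_filter_not (s := F) fun c => wordAt x k c ∈ T
    have hbad := card_mul_le_of_packing (ψ := fun y => φ (shift y x)) (fun _ => hφ0 _)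
      (Nat.sub_le k (R + m)) (F := F.filter fun c => wordAt x k c ∉ T)
      (fun c hc => hF c (Finset.mem_filter.1 hc).1)
      (fun c hc c' hc' => hdisj c (Finset.mem_filter.1 hc).1 c' (Finset.mem_filter.1 hc').1)
      (t := τ * (k : ℝ) ^ d) (fun c hc => by
        have h1 := (Finset.mem_filter.1 hc).2
        simp only [hT, Finset.mem_filter, Finset.mem_univ, true_and, not_le] at h1
        rw [hφ, cubeSum_deviation_extendWord a G H hsR, cubeSum_shift] at h1
        exact h1.le)
    have hsum' : ∑ y ∈ cube d n, φ (shift y x) ≤ lam * (n : ℝ) ^ d := hsum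
    have hfinal : ((F.filter fun c => wordAt x k c ∉ T).card : ℝ) ≤ δ' * F.card := by
      refine le_of_mul_le_mul_left ?_ (mul_pos hτ0 hkd)
      calc τ * (k : ℝ) ^ d * ((F.filter fun c => wordAt x k c ∉ T).card : ℝ)
          ≤ lam * (n : ℝ) ^ d := hbad.trans hsum'
        _ = δ' * τ * (β * (n : ℝ) ^ d) := by rw [hlam]; ring
        _ ≤ δ' * τ * ((F.card : ℝ) * (k : ℝ) ^ d) := by gcongr
        _ = τ * (k : ℝ) ^ d * (δ' * F.card) := by ring
    have hsplit' : ((F.filter fun c => wordAt x k c ∈ T).card : ℝ) +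
        (F.filter fun c => wordAt x k c ∉ T).card = F.card := by exact_mod_cast hsplit
    rw [hncard]
    linarith

end SRU1408
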